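/- (Lemma 4, second inequality.) For every z ∈ C¹(cl Ω_γ) and every i ∈ {1,…,n}, ∫_{Ω_γ} (I_{x_i}z)² χ² dx dy ≤ 2γ ∫_{Ω_γ} (∂z/∂x_i)² χ² dx dy, where I_{x_i}z = ∂/∂x_i ∫₀^{y_m} z(x,y′,τ) dτ = ∫₀^{y_m} (∂z/∂x_i)(x,y′,τ) dτ. -/

import Mathlib

open MeasureTheory Real Finset Function

noncomputable section

abbrev Pt (n m : ℕ) := (Fin n → ℝ) × (Fin m → ℝ)

def pd {n m : ℕ} (v : Pt n m) (f : Pt n m → ℝ) (p : Pt n m) : ℝ :=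
  lineDeriv ℝ f p v

def pd2 {n m : ℕ} (v w : Pt n m) (f : Pt n m → ℝ) (p : Pt n m) : ℝ :=
  lineDeriv ℝ (pd v f) p w

def ex {n m : ℕ} (i : Fin n) : Pt n m := (Pi.single i 1, 0)

def ey {n m : ℕ} (j : Fin m) : Pt n m := (0, Pi.single j 1)

def lastIdx (m : ℕ) [NeZero m] : Fin m :=
  ⟨m - 1, Nat.sub_lt (Nat.pos_of_ne_zero (NeZero.ne m)) one_pos⟩

def psiF {n m : ℕ} [NeZero n] (δ α₀ : ℝ) (x0 : Fin n → ℝ) (y0 : Fin m → ℝ) (p : Pt n m) : ℝ :=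
  δ * p.1 0 + (1/2) * ∑ i ∈ univ.erase (0 : Fin n), (p.1 i - x0 i)^2
    + (1/2) * ∑ j, (p.2 j - y0 j)^2 + α₀

def chiF {n m : ℕ} [NeZero n] (lam ν δ α₀ : ℝ) (x0 : Fin n → ℝ) (y0 : Fin m → ℝ) (p : Pt n m) : ℝ :=
  Real.exp (lam * (psiF δ α₀ x0 y0 p) ^ (-ν))

def OmegaG {n m : ℕ} [NeZero n] (δ γ α₀ : ℝ) (x0 : Fin n → ℝ) (y0 : Fin m → ℝ) : Set (Pt n m) :=
  {p | 0 < p.1 0 ∧ α₀ < psiF δ α₀ x0 y0 p ∧ psiF δ α₀ x0 y0 p < α₀ + γ}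

def L0 {n m : ℕ} [NeZero n] (η₀ : ℝ) (a : Fin m → Fin m → Pt n m → ℝ)
    (φ : Pt n m → ℝ) (p : Pt n m) : ℝ :=
  (p.1 0 + η₀)⁻¹ * pd2 (ex 0) (ex 0) φ p
    + (p.1 0 + η₀) *
      ((∑ i ∈ univ.erase (0 : Fin n), pd2 (ex i) (ex i) φ p)
        - ∑ i, ∑ j, a i j p * pd2 (ey i) (ey j) φ p)

def Iop {n m : ℕ} [NeZero m] (z : Pt n m → ℝ) (p : Pt n m) : ℝ :=
  ∫ τ in (0:ℝ)..(p.2 (lastIdx m)), z (p.1, Function.update p.2 (lastIdx m) τ)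

def C2Bound {n m : ℕ} (M : ℝ) (f : Pt n m → ℝ) : Prop :=
  ContDiff ℝ 2 f ∧ ∀ p : Pt n m, |f p| ≤ M ∧ ‖fderiv ℝ f p‖ ≤ M ∧ ‖fderiv ℝ (fderiv ℝ f) p‖ ≤ M

/-- A function that is `C¹` up to the boundary of an open set with compact closure has bounded
derivative there. -/
lemma ContDiffOn.exists_norm_fderiv_le {E F : Type*} [NormedAddCommGroup E] [NormedSpace ℝ E]
    [NormedAddCommGroup F] [NormedSpace ℝ F] {f : E → F} {s : Set E} (hs : IsOpen s)
    (hc : IsCompact (closure s)) (hf : ContDiffOn ℝ 1 f (closure s)) :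
    ∃ C : ℝ, ∀ x ∈ s, ‖fderiv ℝ f x‖ ≤ C := by
  suffices h : ∃ C : ℝ, ∀ x ∈ closure s ∩ s, ‖fderiv ℝ f x‖ ≤ C by
    obtain ⟨C, hC⟩ := h
    exact ⟨C, fun x hx => hC x ⟨subset_closure hx, hx⟩⟩
  refine hc.induction_on (p := fun t => ∃ C : ℝ, ∀ x ∈ t ∩ s, ‖fderiv ℝ f x‖ ≤ C)
    ⟨0, by simp⟩ ?_ ?_ ?_
  · rintro t u htu ⟨C, hC⟩
    exact ⟨C, fun x hx => hC x ⟨htu hx.1, hx.2⟩⟩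
  · rintro t u ⟨C, hC⟩ ⟨D, hD⟩
    refine ⟨max C D, ?_⟩
    rintro x ⟨hx | hx, hxs⟩
    · exact (hC x ⟨hx, hxs⟩).trans (le_max_left _ _)
    · exact (hD x ⟨hx, hxs⟩).trans (le_max_right _ _)
  · intro x hx
    have h1 : ContDiffWithinAt ℝ (0 + 1) f (closure s) x := by simpa using hf x hx
    obtain ⟨u, hu, -, -, f', hf', hcont⟩ :=
      (contDiffWithinAt_succ_iff_hasFDerivWithinAt' (by simp)).1 h1
    rw [Set.insert_eq_of_mem hx] at hu
    have hlt := hcont.continuousWithinAt.norm.eventually_lt_const (lt_add_one ‖f' x‖)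
    refine ⟨u ∩ {y | ‖f' y‖ < ‖f' x‖ + 1}, Filter.inter_mem hu hlt, ‖f' x‖ + 1, ?_⟩
    rintro y ⟨⟨hyu, hy⟩, hys⟩
    have hfd := ((hf' y hyu).mono subset_closure).hasFDerivAt (hs.mem_nhds hys)
    rw [hfd.fderiv]
    exact le_of_lt hy

lemma lintegral_apply_mul_lintegral_update {ι : Type*} [Fintype ι] [DecidableEq ι] (j : ι)
    {A : ℝ → ENNReal} (hA : Measurable A) {G : (ι → ℝ) → ENNReal} (hG : Measurable G) :
    ∫⁻ y, A (y j) * ∫⁻ t, G (update y j t) = (∫⁻ t, A t) * ∫⁻ y, G y := by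
  have hM : Measurable fun y : ι → ℝ => ∫⁻ t, G (update y j t) := by
    have h := hG.lmarginal (s := {j}) (μ := fun _ : ι => (volume : Measure ℝ))
    rwa [lmarginal_singleton] at h
  rw [← lintegral_const_mul _ hG]
  refine lintegral_eq_of_lmarginal_eq (μ := fun _ : ι => (volume : Measure ℝ)) {j}
    ((hA.comp (measurable_pi_apply j)).mul hM) (hG.const_mul _) ?_
  rw [lmarginal_singleton, lmarginal_singleton]
  ext y
  simp only [update_self, update_idem]
  rw [lintegral_mul_const _ hA,
    lintegral_const_mul (f := fun t => G (update y j t)) _ (hG.comp (measurable_update y))]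

lemma sq_lintegral_le_measure_mul_lintegral_sq {α : Type*} [MeasurableSpace α] (μ : Measure α)
    {f : α → ENNReal} (hf : AEMeasurable f μ) :
    (∫⁻ a, f a ∂μ) ^ 2 ≤ μ Set.univ * ∫⁻ a, f a ^ 2 ∂μ := by
  have h := ENNReal.lintegral_mul_le_Lp_mul_Lq μ Real.HolderConjugate.two_two
    (aemeasurable_const (b := (1 : ENNReal))) hf
  simp only [Pi.mul_apply, one_mul, ENNReal.one_rpow, lintegral_one] at h
  calc (∫⁻ a, f a ∂μ) ^ 2
      ≤ (μ Set.univ ^ (1 / 2 : ℝ) * (∫⁻ a, f a ^ (2 : ℝ) ∂μ) ^ (1 / 2 : ℝ)) ^ 2 := by gcongr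
    _ = μ Set.univ * ∫⁻ a, f a ^ 2 ∂μ := by
      rw [mul_pow, ← ENNReal.rpow_natCast, ← ENNReal.rpow_natCast, ← ENNReal.rpow_mul,
        ← ENNReal.rpow_mul]
      simp

lemma lintegral_enorm_Ioo_neg {R : ℝ} (hR : 0 ≤ R) :
    ∫⁻ t in Set.Ioo (-R) R, ‖t‖ₑ = ENNReal.ofReal (R ^ 2) := by
  have hle : -R ≤ R := by linarith
  rw [restrict_Ioo_eq_restrict_Ioc, ← ofReal_integral_norm_eq_lintegral_enorm,
    ← intervalIntegral.integral_of_le hle,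
    ← intervalIntegral.integral_add_adjacent_intervals (b := 0)]
  · congr 1
    have h1 : ∫ t in (-R)..0, ‖t‖ = ∫ t in (-R)..0, -t := by
      refine intervalIntegral.integral_congr fun t ht => ?_
      rw [Set.uIcc_of_le (by linarith)] at ht
      simp [abs_of_nonpos ht.2]
    have h2 : ∫ t in (0 : ℝ)..R, ‖t‖ = ∫ t in (0 : ℝ)..R, t := by
      refine intervalIntegral.integral_congr fun t ht => ?_
      rw [Set.uIcc_of_le hR] at ht
      simp [abs_of_nonneg ht.1]
    rw [h1, h2, intervalIntegral.integral_neg, integral_id, integral_id]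
    ring
  · exact continuous_norm.intervalIntegrable _ _
  · exact continuous_norm.intervalIntegrable _ _
  · exact (intervalIntegrable_iff_integrableOn_Ioc_of_le hle).1
      (continuous_id.intervalIntegrable _ _)

section Weight

variable {n m : ℕ} [NeZero n] {δ γ α₀ lam ν : ℝ} {x0 : Fin n → ℝ} {y0 : Fin m → ℝ}

lemma continuous_psiF : Continuous (psiF δ α₀ x0 y0) := by
  unfold psiF
  fun_prop

lemma isOpen_OmegaG : IsOpen (OmegaG δ γ α₀ x0 y0) :=
  (isOpen_lt continuous_const ((continuous_apply 0).comp continuous_fst)).inter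
    ((isOpen_lt continuous_const continuous_psiF).inter
      (isOpen_lt continuous_psiF continuous_const))

lemma measurable_chiF : Measurable (chiF lam ν δ α₀ x0 y0) := by
  have := (continuous_psiF (δ := δ) (α₀ := α₀) (x0 := x0) (y0 := y0)).measurable
  unfold chiF
  fun_prop

lemma chiF_nonneg (p : Pt n m) : 0 ≤ chiF lam ν δ α₀ x0 y0 p := Real.exp_nonneg _

lemma chiF_le_of_psiF_le (hlam : 0 < lam) (hν : 1 < ν) {p q : Pt n m}
    (hq : 0 < psiF δ α₀ x0 y0 q) (hqp : psiF δ α₀ x0 y0 q ≤ psiF δ α₀ x0 y0 p) :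
    chiF lam ν δ α₀ x0 y0 p ≤ chiF lam ν δ α₀ x0 y0 q := by
  refine Real.exp_le_exp.2 (mul_le_mul_of_nonneg_left ?_ hlam.le)
  exact Real.rpow_le_rpow_of_nonpos hq hqp (by linarith)

lemma chiF_le_of_mem_OmegaG (hα₀ : 0 < α₀) (hlam : 0 < lam) (hν : 1 < ν) {p : Pt n m}
    (hp : p ∈ OmegaG δ γ α₀ x0 y0) :
    chiF lam ν δ α₀ x0 y0 p ≤ Real.exp (lam * α₀ ^ (-ν)) := by
  refine Real.exp_le_exp.2 (mul_le_mul_of_nonneg_left ?_ hlam.le)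
  exact Real.rpow_le_rpow_of_nonpos hα₀ hp.2.1.le (by linarith)

lemma sq_sub_lt_of_mem_OmegaG (hδ : 4 < δ) {p : Pt n m} (hp : p ∈ OmegaG δ γ α₀ x0 y0)
    (j : Fin m) : (p.2 j - y0 j) ^ 2 < 2 * γ := by
  obtain ⟨h0, -, h2⟩ := hp
  have hj := Finset.single_le_sum (f := fun j => (p.2 j - y0 j) ^ 2)
    (fun j _ => sq_nonneg _) (mem_univ j)
  have hx : 0 ≤ ∑ i ∈ univ.erase (0 : Fin n), (p.1 i - x0 i) ^ 2 :=
    Finset.sum_nonneg fun i _ => sq_nonneg _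
  have hδp : 0 < δ * p.1 0 := by positivity
  unfold psiF at h2
  linarith

lemma isBounded_OmegaG (hδ : 4 < δ) (hγ1 : γ < 1) :
    Bornology.IsBounded (OmegaG δ γ α₀ x0 y0) := by
  have hx : Bornology.IsBounded
      (Set.univ.pi fun i : Fin n => Set.Icc (min 0 (x0 i - 2)) (max 1 (x0 i + 2))) :=
    Bornology.IsBounded.pi fun i => Metric.isBounded_Icc _ _
  have hy : Bornology.IsBounded
      (Set.univ.pi fun j : Fin m => Set.Icc (y0 j - 2) (y0 j + 2)) :=
    Bornology.IsBounded.pi fun j => Metric.isBounded_Icc _ _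
  refine (hx.prod hy).subset fun p hp => ⟨fun i _ => ?_, fun j _ => ?_⟩
  · obtain ⟨h0, -, h2⟩ := hp
    have hsy : 0 ≤ ∑ j, (p.2 j - y0 j) ^ 2 := Finset.sum_nonneg fun j _ => sq_nonneg _
    have hδp : 4 * p.1 0 ≤ δ * p.1 0 := by gcongr
    unfold psiF at h2
    by_cases hi : i = 0
    · subst hi
      have hsx : 0 ≤ ∑ i ∈ univ.erase (0 : Fin n), (p.1 i - x0 i) ^ 2 :=
        Finset.sum_nonneg fun i _ => sq_nonneg _
      exact ⟨(min_le_left _ _).trans h0.le, le_trans (by linarith) (le_max_left _ _)⟩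
    · have hsi := Finset.single_le_sum (f := fun i => (p.1 i - x0 i) ^ 2)
        (fun i _ => sq_nonneg _) (mem_erase.2 ⟨hi, mem_univ i⟩)
      have habs := abs_le.1 (abs_le_of_sq_le_sq (a := p.1 i - x0 i) (b := 2)
        (by linarith) (by norm_num))
      exact ⟨(min_le_right _ _).trans (by linarith [habs.1]),
        le_trans (by linarith [habs.2]) (le_max_right _ _)⟩
  · have habs := abs_le.1 (abs_le_of_sq_le_sq (a := p.2 j - y0 j) (b := 2)
      (by linarith [sq_sub_lt_of_mem_OmegaG hδ hp j]) (by norm_num))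
    exact ⟨by linarith [habs.1], by linarith [habs.2]⟩

lemma psiF_update_le {p : Pt n m} {j : Fin m} (hy0 : y0 j = 0) {t : ℝ} (ht : |t| ≤ |p.2 j|) :
    psiF δ α₀ x0 y0 (p.1, update p.2 j t) ≤ psiF δ α₀ x0 y0 p := by
  have hsum : ∑ k, (update p.2 j t k - y0 k) ^ 2 ≤ ∑ k, (p.2 k - y0 k) ^ 2 := by
    refine Finset.sum_le_sum fun k _ => ?_
    by_cases hk : k = j
    · subst hk
      simpa [hy0] using sq_le_sq.2 ht
    · simp [hk]
  simp only [psiF]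
  linarith

lemma update_mem_OmegaG (hδ : 4 < δ) {p : Pt n m} (hp : p ∈ OmegaG δ γ α₀ x0 y0) {j : Fin m}
    (hy0 : y0 j = 0) {t : ℝ} (ht : |t| ≤ |p.2 j|) :
    (p.1, update p.2 j t) ∈ OmegaG δ γ α₀ x0 y0 := by
  refine ⟨hp.1, ?_, (psiF_update_le hy0 ht).trans_lt hp.2.2⟩
  have hsx : 0 ≤ ∑ i ∈ univ.erase (0 : Fin n), (p.1 i - x0 i) ^ 2 :=
    Finset.sum_nonneg fun i _ => sq_nonneg _
  have hsy : 0 ≤ ∑ k, (update p.2 j t k - y0 k) ^ 2 := Finset.sum_nonneg fun k _ => sq_nonneg _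
  have hδp : 0 < δ * p.1 0 := mul_pos (by linarith) hp.1
  simp only [psiF]
  linarith

/-- Pointwise weighted Cauchy–Schwarz estimate for the integration operator. -/
lemma enorm_Iop_sq_mul_chiF_sq_le [NeZero m] (hδ : 4 < δ) (hα₀ : 0 < α₀) (hlam : 0 < lam)
    (hν : 1 < ν) (hy0 : y0 (lastIdx m) = 0) {f : Pt n m → ℝ}
    (hf : Measurable ((OmegaG δ γ α₀ x0 y0).indicator f)) {p : Pt n m}
    (hp : p ∈ OmegaG δ γ α₀ x0 y0) :
    ‖Iop f p ^ 2 * chiF lam ν δ α₀ x0 y0 p ^ 2‖ₑ ≤ ‖p.2 (lastIdx m)‖ₑ *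
      ∫⁻ t, (OmegaG δ γ α₀ x0 y0).indicator (fun q => ‖f q ^ 2 * chiF lam ν δ α₀ x0 y0 q ^ 2‖ₑ)
        (p.1, update p.2 (lastIdx m) t) := by
  set j := lastIdx m
  set Ω := OmegaG δ γ α₀ x0 y0
  set line : ℝ → Pt n m := fun t => (p.1, update p.2 j t)
  have hline : Measurable line := measurable_const.prodMk (measurable_update p.2)
  have habs : ∀ t ∈ Set.uIoc 0 (p.2 j), |t| ≤ |p.2 j| := fun t ht => by
    simpa using Set.abs_sub_left_of_mem_uIcc (Set.uIoc_subset_uIcc ht)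
  have hmem : ∀ t ∈ Set.uIoc 0 (p.2 j), line t ∈ Ω := fun t ht =>
    update_mem_OmegaG hδ hp hy0 (habs t ht)
  have hmeas : AEMeasurable (fun t => ‖f (line t)‖ₑ) (volume.restrict (Set.uIoc 0 (p.2 j))) := by
    refine ((hf.comp hline).enorm.aemeasurable).congr ?_
    filter_upwards [ae_restrict_mem measurableSet_uIoc] with t ht
    simp [Set.indicator_of_mem (hmem t ht)]
  have hI : ‖Iop f p‖ₑ ≤ ∫⁻ t in Set.uIoc 0 (p.2 j), ‖f (line t)‖ₑ := by
    have h : ‖Iop f p‖ₑ = ‖∫ t in Set.uIoc 0 (p.2 j), f (line t)‖ₑ := by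
      rw [← ofReal_norm, ← ofReal_norm, Iop, intervalIntegral.norm_intervalIntegral_eq]
    rw [h]
    exact enorm_integral_le_lintegral_enorm _
  have hvol : (volume.restrict (Set.uIoc 0 (p.2 j))) Set.univ = ‖p.2 j‖ₑ := by
    simp [Real.enorm_eq_ofReal_abs]
  calc ‖Iop f p ^ 2 * chiF lam ν δ α₀ x0 y0 p ^ 2‖ₑ
      = ‖Iop f p‖ₑ ^ 2 * ‖chiF lam ν δ α₀ x0 y0 p‖ₑ ^ 2 := by rw [enorm_mul, enorm_pow, enorm_pow]
    _ ≤ (‖p.2 j‖ₑ * ∫⁻ t in Set.uIoc 0 (p.2 j), ‖f (line t)‖ₑ ^ 2) *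
          ‖chiF lam ν δ α₀ x0 y0 p‖ₑ ^ 2 := by
        rw [← hvol]
        gcongr
        exact le_trans (by gcongr) (sq_lintegral_le_measure_mul_lintegral_sq _ hmeas)
    _ = ‖p.2 j‖ₑ * ∫⁻ t in Set.uIoc 0 (p.2 j),
          ‖f (line t)‖ₑ ^ 2 * ‖chiF lam ν δ α₀ x0 y0 p‖ₑ ^ 2 := by
        rw [mul_assoc, lintegral_mul_const'' _ (hmeas.pow_const 2)]
    _ ≤ ‖p.2 j‖ₑ * ∫⁻ t in Set.uIoc 0 (p.2 j),
          Ω.indicator (fun q => ‖f q ^ 2 * chiF lam ν δ α₀ x0 y0 q ^ 2‖ₑ) (line t) := by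
        gcongr ‖p.2 j‖ₑ * ?_
        refine setLIntegral_mono' measurableSet_uIoc fun t ht => ?_
        rw [Set.indicator_of_mem (hmem t ht), enorm_mul, enorm_pow, enorm_pow]
        gcongr
        rw [Real.enorm_of_nonneg (chiF_nonneg _), Real.enorm_of_nonneg (chiF_nonneg _)]
        exact ENNReal.ofReal_le_ofReal (chiF_le_of_psiF_le hlam hν
          (hα₀.trans (hmem t ht).2.1) (psiF_update_le hy0 (habs t ht)))
    _ ≤ _ := by
        gcongr
        exact Measure.restrict_le_self

end Weight

/-- (Lemma 4, second inequality.)  For every `z ∈ C¹(cl Ω_γ)` and every `i ∈ {1,…,n}`,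
`∫_{Ω_γ} (I_{x_i}z)² χ² ≤ 2γ ∫_{Ω_γ} (∂z/∂x_i)² χ²`, where
`I_{x_i}z = ∫₀^{y_m} (∂z/∂x_i)(x,y′,τ) dτ`. -/
theorem stmt5 (n m : ℕ) [NeZero n] [NeZero m] (hn : 2 ≤ n) (hm : 2 ≤ m)
    (δ γ α₀ lam ν : ℝ) (hδ : 4 < δ) (hγ0 : 0 < γ) (hγ1 : γ < 1)
    (hα₀ : 0 < α₀) (hγα : γ + α₀ < 1) (hlam : 0 < lam) (hν : 1 < ν)
    (x0 : Fin n → ℝ) (y0 : Fin m → ℝ) (hx0 : x0 0 = 0) (hy0 : y0 (lastIdx m) = 0)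
    (z : Pt n m → ℝ) (hz : ContDiffOn ℝ 1 z (closure (OmegaG δ γ α₀ x0 y0))) :
    ∀ i : Fin n,
      ∫ p in OmegaG δ γ α₀ x0 y0, (Iop (pd (ex i) z) p) ^ 2 * (chiF lam ν δ α₀ x0 y0 p) ^ 2
        ≤ 2 * γ * ∫ p in OmegaG δ γ α₀ x0 y0,
            (pd (ex i) z p) ^ 2 * (chiF lam ν δ α₀ x0 y0 p) ^ 2 := by
  intro i
  set Ω := OmegaG δ γ α₀ x0 y0
  set f := pd (ex i) z
  set χ := chiF lam ν δ α₀ x0 y0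
  set j := lastIdx m
  have hΩ : IsOpen Ω := isOpen_OmegaG
  have hbdd : Bornology.IsBounded Ω := isBounded_OmegaG hδ hγ1
  have hzΩ : ContDiffOn ℝ 1 z Ω := hz.mono subset_closure
  have hfd : ∀ p ∈ Ω, f p = fderiv ℝ z p (ex i) := fun p hp =>
    ((hzΩ.differentiableOn one_ne_zero).differentiableAt (hΩ.mem_nhds hp)).lineDeriv_eq_fderiv
  have hfc : ContinuousOn f Ω :=
    ((hzΩ.continuousOn_fderiv_of_isOpen hΩ le_rfl).clm_apply continuousOn_const).congr hfd
  have hfm : Measurable (Ω.indicator f) := by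
    classical
    rw [← Set.piecewise_eq_indicator]
    exact hfc.measurable_piecewise continuousOn_const hΩ.measurableSet
  obtain ⟨C, hC⟩ := hz.exists_norm_fderiv_le hΩ hbdd.isCompact_closure
  set g : Pt n m → ℝ := fun p => f p ^ 2 * χ p ^ 2
  have hgm : AEStronglyMeasurable g (volume.restrict Ω) :=
    (((hfc.aemeasurable hΩ.measurableSet).pow_const 2).mul
      (measurable_chiF.aemeasurable.pow_const 2)).aestronglyMeasurable
  have hgi : IntegrableOn g Ω := by
    refine IntegrableOn.of_bound hbdd.measure_lt_top hgm
      ((C * ‖(ex i : Pt n m)‖) ^ 2 * Real.exp (lam * α₀ ^ (-ν)) ^ 2) ?_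
    filter_upwards [ae_restrict_mem hΩ.measurableSet] with p hp
    have hfb : ‖f p‖ ≤ C * ‖(ex i : Pt n m)‖ := by
      rw [hfd p hp]
      exact (ContinuousLinearMap.le_opNorm _ _).trans (by gcongr; exact hC p hp)
    have hχb : ‖χ p‖ ≤ Real.exp (lam * α₀ ^ (-ν)) := by
      rw [Real.norm_of_nonneg (chiF_nonneg p)]
      exact chiF_le_of_mem_OmegaG hα₀ hlam hν hp
    rw [norm_mul, norm_pow, norm_pow]
    gcongr
  set G : Pt n m → ENNReal := Ω.indicator fun q => ‖g q‖ₑ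
  have hGm : Measurable G := by
    have h : G = fun q => ‖Ω.indicator f q ^ 2 * χ q ^ 2‖ₑ := by
      ext q
      by_cases hq : q ∈ Ω <;> simp [G, g, hq]
    rw [h]
    exact ((hfm.pow_const 2).mul (measurable_chiF.pow_const 2)).enorm
  set I : Set ℝ := Set.Ioo (-√(2 * γ)) √(2 * γ)
  set A : ℝ → ENNReal := I.indicator fun t => ‖t‖ₑ
  have hAm : Measurable A := measurable_enorm.indicator measurableSet_Ioo
  have hA : ∫⁻ t, A t = ENNReal.ofReal (2 * γ) := by
    rw [lintegral_indicator measurableSet_Ioo, lintegral_enorm_Ioo_neg (Real.sqrt_nonneg _),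
      Real.sq_sqrt (by positivity)]
  have hmain : ∫⁻ p in Ω, ‖Iop f p ^ 2 * χ p ^ 2‖ₑ ≤
      ENNReal.ofReal (2 * γ) * ∫⁻ p in Ω, ‖g p‖ₑ := by
    calc ∫⁻ p in Ω, ‖Iop f p ^ 2 * χ p ^ 2‖ₑ
        ≤ ∫⁻ p in Ω, A (p.2 j) * ∫⁻ t, G (p.1, update p.2 j t) := by
          refine setLIntegral_mono' hΩ.measurableSet fun p hp => ?_
          have hpI : p.2 j ∈ I := by
            have h := sq_sub_lt_of_mem_OmegaG hδ hp j
            rw [hy0, sub_zero] at h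
            exact abs_lt.1 (Real.lt_sqrt_of_sq_lt (by rwa [sq_abs]))
          simp only [A, Set.indicator_of_mem hpI]
          exact enorm_Iop_sq_mul_chiF_sq_le hδ hα₀ hlam hν hy0 hfm hp
      _ ≤ ∫⁻ p : Pt n m, A (p.2 j) * ∫⁻ t, G (p.1, update p.2 j t) :=
          setLIntegral_le_lintegral _ _
      _ ≤ ∫⁻ x, ∫⁻ y, A (y j) * ∫⁻ t, G (x, update y j t) := lintegral_prod_le _
      _ = ∫⁻ x, ENNReal.ofReal (2 * γ) * ∫⁻ y, G (x, y) := by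
          refine lintegral_congr fun x => ?_
          rw [lintegral_apply_mul_lintegral_update j hAm
            (G := fun y => G (x, y)) (hGm.comp measurable_prodMk_left), hA]
      _ = ENNReal.ofReal (2 * γ) * ∫⁻ p in Ω, ‖g p‖ₑ := by
          rw [lintegral_const_mul _ hGm.lintegral_prod_right',
            ← lintegral_indicator hΩ.measurableSet, Measure.volume_eq_prod, lintegral_prod _ hGm.aemeasurable]
  have hg0 : ∀ p, 0 ≤ g p := fun p => by positivity
  have hle := (enorm_integral_le_lintegral_enorm _).trans hmain
  rw [← ofReal_integral_norm_eq_lintegral_enorm hgi, ← ENNReal.ofReal_mul (by positivity),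
    Real.enorm_of_nonneg (integral_nonneg fun p => by positivity)] at hle
  simp only [Real.norm_of_nonneg (hg0 _)] at hle
  exact (ENNReal.ofReal_le_ofReal_iff
    (mul_nonneg (by positivity) (integral_nonneg hg0))).1 hle
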